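/- Let φ be a Lie algebra automorphism of I(X,K). Then φ is a regular Hom-Lie structure on I(X,K) if and only if there exist (i) β = δ + ρ with ρ ∈ Z(J(I(X,K))), (ii) a multiplicative map σ : {(x,y) ∈ X² : x≤y} → K∖{0} with σ(x,y) = 1 for every x < y such that x ∉ Min(X) or y ∉ Max(X), and (iii) a K-linear map ν : I(X,K) → I(X,K) all of whose values are scalar multiples of δ and which vanishes on J(I(X,K)), such that φ = ξ_β ∘ M_σ + ν. Moreover, such β, σ and ν are unique. -/

import Mathlib

open IncidenceAlgebra

attribute [local instance 100] LieRing.ofAssociativeRing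

/-- The Hom-Jacobi identity for a map `φ` on a Lie ring. -/
def HomJacobi {A : Type*} [LieRing A] (φ : A → A) : Prop :=
  ∀ a b c : A, ⁅⁅a, b⁆, φ c⁆ + ⁅⁅b, c⁆, φ a⁆ + ⁅⁅c, a⁆, φ b⁆ = 0

/-- `φ` is a regular Hom-Lie structure: a Lie algebra automorphism satisfying Hom-Jacobi. -/
def IsRegHomLie (K : Type*) {A : Type*} [CommRing K] [LieRing A] [LieAlgebra K A]
    (φ : A → A) : Prop :=
  (∃ e : A ≃ₗ⁅K⁆ A, ⇑e = φ) ∧ HomJacobi φ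

/-- The "matrix unit" `e_{xy}` of the incidence algebra, for `x ≤ y`. -/
def eSingle (K : Type*) [Field K] {X : Type*} [PartialOrder X] [DecidableEq X]
    (x y : X) (_h : x ≤ y) : IncidenceAlgebra K X where
  toFun u v := if u = x ∧ v = y then 1 else 0
  eq_zero_of_not_le' u v huv := by
    split_ifs with h'
    · exact absurd (by rw [h'.1, h'.2]; exact _h) huv
    · rfl

/-- The multiplicative map `M_σ` on the incidence algebra: `(M_σ f)(x,y) = σ(x,y) f(x,y)`. -/
def Mmul (K : Type*) [Field K] {X : Type*} [PartialOrder X]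
    (σ : X → X → K) (f : IncidenceAlgebra K X) : IncidenceAlgebra K X where
  toFun u v := σ u v * f u v
  eq_zero_of_not_le' u v huv := by
    rw [apply_eq_zero_of_not_le huv f, mul_zero]

/-- The conjugation map `ξ_β : f ↦ β f β⁻¹`. -/
noncomputable def xiMap {K : Type*} [Field K] {X : Type*} [PartialOrder X] [DecidableEq X]
    [LocallyFiniteOrder X] (β : IncidenceAlgebra K X) :
    IncidenceAlgebra K X → IncidenceAlgebra K X :=
  fun f => β * f * Ring.inverse β

/-- `l(x,y)`: the maximal length of a chain from `x` to `y`. -/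
noncomputable def chainLen {X : Type*} [PartialOrder X] (x y : X) : ℕ :=
  sSup {n : ℕ | ∃ c : Fin (n + 1) → X, StrictMono c ∧ c 0 = x ∧ c (Fin.last n) = y}

/-- `J^m`: the `K`-span of the `e_{xy}` with `x < y` and `l(x,y) ≥ m`. -/
noncomputable def Jpow (K : Type*) [Field K] {X : Type*} [PartialOrder X] [DecidableEq X]
    (m : ℕ) : Submodule K (IncidenceAlgebra K X) :=
  Submodule.span K {f | ∃ x y, ∃ h : x < y, m ≤ chainLen x y ∧ f = eSingle K x y h.le}


/-- The data of a decomposition `φ = ξ_{δ+ρ} ∘ M_σ + ν` as in the main theorem: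
`ρ ∈ Z(J(I(X,K)))`, `σ` multiplicative with `σ(x,y) = 1` unless `x` is minimal and `y` is
maximal, and `ν` central-valued, vanishing on `J(I(X,K))`. -/
def RepData {K : Type*} [Field K] {X : Type*} [PartialOrder X] [DecidableEq X]
    [LocallyFiniteOrder X]
    (φ : IncidenceAlgebra K X → IncidenceAlgebra K X)
    (ρ : IncidenceAlgebra K X) (σ : X → X → K)
    (ν : IncidenceAlgebra K X →ₗ[K] IncidenceAlgebra K X) : Prop :=
  (∀ x : X, ρ x x = 0) ∧
  (∀ x y : X, x < y → (¬IsMin x ∨ ¬IsMax y) → ρ x y = 0) ∧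
  (∀ x y : X, x ≤ y → σ x y ≠ 0) ∧
  (∀ x y z : X, x ≤ y → y ≤ z → σ x z = σ x y * σ y z) ∧
  (∀ x y : X, x < y → (¬IsMin x ∨ ¬IsMax y) → σ x y = 1) ∧
  (∀ f, ∃ c : K, ν f = c • (1 : IncidenceAlgebra K X)) ∧
  (∀ f : IncidenceAlgebra K X, (∀ x, f x x = 0) → ν f = 0) ∧
  (∀ f, φ f = xiMap (1 + ρ) (Mmul K σ f) + ν f)

/-!
Call `J` the ideal of functions vanishing on the diagonal, and let `F_z = φ (e_z)` for the diagonal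
idempotents `e_z`. The Hom-Jacobi identity for `e_x`, `e_{xy}`, `e_z` shows that `[e_{xy}, F_z]` is
`[e_{xy}, F_x]` times the weight of `e_{xy}` under `e_z`. Since `φ` is a Lie homomorphism, `F_z`
acts on `φ (e_{xy})` by that same weight, and comparing weights at an entry of smallest support
forces `[e_{xy}, F_z] = [e_{xy}, e_z]`. As `X` is connected, the elements commuting with all
`e_{xy}`, `x < y`, are those of `K δ + Z(J)`, so `F_z - e_z` lies there and commutes with all of
`J`. This makes `φ (e_{xy})` a multiple `σ(x,y) e_{xy}`, and applying `φ` to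
`[e_u, [f, e_v]] = f(u,v) e_{uv}` yields every entry of `φ f`. Conversely, a map of the stated form
satisfies `[g, φ f] = [g, f]` for `g` in `J`, so the Hom-Jacobi identity reduces to the Jacobi
identity.
-/

section Basic

variable {R X : Type*} [PartialOrder X]

/-- Membership in the Jacobson radical `J(I(X,R))`, encoded as vanishing on the diagonal. -/
def HasZeroDiag [Zero R] (f : IncidenceAlgebra R X) : Prop :=
  ∀ x, f x x = 0

/-- Membership in the center `Z(J(I(X,R)))` of the Jacobson radical, encoded as vanishing outside
the pairs `x < y` with `x` minimal and `y` maximal. -/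
def SupportedOnMinMax [Zero R] (ρ : IncidenceAlgebra R X) : Prop :=
  HasZeroDiag ρ ∧ ∀ x y, x < y → (¬IsMin x ∨ ¬IsMax y) → ρ x y = 0

namespace SupportedOnMinMax

theorem apply_eq_zero_of_lt_left [Zero R] {ρ : IncidenceAlgebra R X}
    (hρ : SupportedOnMinMax ρ) {t u : X} (h : t < u) (v : X) : ρ u v = 0 := by
  by_cases huv : u ≤ v
  · rcases huv.eq_or_lt with rfl | huv
    · exact hρ.1 u
    · exact hρ.2 u v huv (Or.inl h.not_isMin)
  · exact apply_eq_zero_of_not_le huv ρ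

theorem apply_eq_zero_of_lt_right [Zero R] {ρ : IncidenceAlgebra R X}
    (hρ : SupportedOnMinMax ρ) {v t : X} (h : v < t) (u : X) : ρ u v = 0 := by
  by_cases huv : u ≤ v
  · rcases huv.eq_or_lt with rfl | huv
    · exact hρ.1 u
    · exact hρ.2 u v huv (Or.inr h.not_isMax)
  · exact apply_eq_zero_of_not_le huv ρ

end SupportedOnMinMax

variable [LocallyFiniteOrder X]

theorem incidence_mul_apply_self [NonUnitalNonAssocSemiring R] (f g : IncidenceAlgebra R X)
    (x : X) : (f * g) x x = f x x * g x x := by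
  simp

theorem exists_ne_zero_forall_lt_eq_zero [Zero R] {g : IncidenceAlgebra R X} (hg : g ≠ 0) :
    ∃ u v, g u v ≠ 0 ∧ (∀ t, u < t → g t v = 0) ∧ ∀ t, t < v → g u t = 0 := by
  have hne : {p : X × X | g p.1 p.2 ≠ 0}.Nonempty := by
    by_contra! h
    exact hg (ext fun a b _ => not_not.1 (Set.eq_empty_iff_forall_notMem.1 h (a, b)))
  obtain ⟨⟨u, v⟩, huv, hmin⟩ :=
    (measure fun p : X × X => (Finset.Icc p.1 p.2).card).wf.has_min _ hne
  have hle : u ≤ v := le_of_ne_zero huv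
  refine ⟨u, v, huv, fun t hut => ?_, fun t htv => ?_⟩
  · by_contra h
    exact hmin (t, v) h (Finset.card_lt_card (Finset.Icc_ssubset_Icc_left hle hut le_rfl))
  · by_contra h
    exact hmin (u, t) h (Finset.card_lt_card (Finset.Icc_ssubset_Icc_right hle le_rfl htv))

namespace SupportedOnMinMax

theorem left_mul_apply [NonUnitalNonAssocSemiring R] {ρ : IncidenceAlgebra R X}
    (hρ : SupportedOnMinMax ρ) (g : IncidenceAlgebra R X) (u v : X) :
    (ρ * g) u v = ρ u v * g v v := by
  rw [IncidenceAlgebra.mul_apply]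
  refine Finset.sum_eq_single v (fun t ht hne => ?_) (fun hv => ?_)
  · rw [hρ.apply_eq_zero_of_lt_right (lt_of_le_of_ne (Finset.mem_Icc.1 ht).2 hne), zero_mul]
  · rw [apply_eq_zero_of_not_le (fun h => hv (Finset.right_mem_Icc.2 h)), zero_mul]

theorem right_mul_apply [NonUnitalNonAssocSemiring R] {ρ : IncidenceAlgebra R X}
    (hρ : SupportedOnMinMax ρ) (g : IncidenceAlgebra R X) (u v : X) :
    (g * ρ) u v = g u u * ρ u v := by
  rw [IncidenceAlgebra.mul_apply]
  refine Finset.sum_eq_single u (fun t ht hne => ?_) (fun hu => ?_)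
  · rw [hρ.apply_eq_zero_of_lt_left (lt_of_le_of_ne (Finset.mem_Icc.1 ht).1 hne.symm), mul_zero]
  · rw [apply_eq_zero_of_not_le (fun h => hu (Finset.left_mem_Icc.2 h)) ρ, mul_zero]

theorem mul_mul_self [NonUnitalNonAssocSemiring R] {ρ : IncidenceAlgebra R X}
    (hρ : SupportedOnMinMax ρ) (g : IncidenceAlgebra R X) : ρ * g * ρ = 0 := by
  ext u v
  rw [hρ.right_mul_apply, incidence_mul_apply_self, hρ.1, zero_mul, zero_mul,
    IncidenceAlgebra.zero_apply]

end SupportedOnMinMax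

variable [DecidableEq X]

theorem incidence_lie_apply [Ring R] (f g : IncidenceAlgebra R X) (a b : X) :
    ⁅f, g⁆ a b = (f * g) a b - (g * f) a b :=
  rfl

theorem hasZeroDiag_lie [CommRing R] (f g : IncidenceAlgebra R X) : HasZeroDiag ⁅f, g⁆ := by
  intro x
  rw [incidence_lie_apply, incidence_mul_apply_self, incidence_mul_apply_self, mul_comm, sub_self]

theorem exists_ne_zero_lie_apply_eq [Ring R] {g : IncidenceAlgebra R X} (hg : g ≠ 0) :
    ∃ u v, g u v ≠ 0 ∧ ∀ f : IncidenceAlgebra R X,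
      ⁅f, g⁆ u v = f u u * g u v - g u v * f v v := by
  obtain ⟨u, v, huv, hleft, hright⟩ := exists_ne_zero_forall_lt_eq_zero hg
  have hle : u ≤ v := le_of_ne_zero huv
  refine ⟨u, v, huv, fun f => ?_⟩
  rw [incidence_lie_apply, mul_apply, mul_apply,
    Finset.sum_eq_single_of_mem u (Finset.left_mem_Icc.2 hle),
    Finset.sum_eq_single_of_mem v (Finset.right_mem_Icc.2 hle)]
  · intro t ht hne
    rw [hright t (lt_of_le_of_ne (Finset.mem_Icc.1 ht).2 hne), zero_mul]
  · intro t ht hne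
    rw [hleft t (lt_of_le_of_ne (Finset.mem_Icc.1 ht).1 hne.symm), mul_zero]

namespace SupportedOnMinMax

theorem lie_apply [Ring R] {ρ : IncidenceAlgebra R X} (hρ : SupportedOnMinMax ρ)
    (g : IncidenceAlgebra R X) (u v : X) :
    ⁅g, ρ⁆ u v = g u u * ρ u v - ρ u v * g v v := by
  rw [incidence_lie_apply, hρ.left_mul_apply, hρ.right_mul_apply]

theorem lie_eq_zero [Ring R] {ρ : IncidenceAlgebra R X} (hρ : SupportedOnMinMax ρ)
    {g : IncidenceAlgebra R X} (hg : HasZeroDiag g) : ⁅g, ρ⁆ = 0 := by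
  ext u v
  rw [hρ.lie_apply, hg, hg, zero_mul, mul_zero, sub_zero, IncidenceAlgebra.zero_apply]

theorem inverse_one_add [Ring R] {ρ : IncidenceAlgebra R X} (hρ : SupportedOnMinMax ρ) :
    Ring.inverse (1 + ρ) = 1 - ρ := by
  have hsq : ρ * ρ = 0 := by simpa only [mul_one] using hρ.mul_mul_self 1
  have hright : (1 + ρ) * (1 - ρ) = 1 := by
    rw [mul_sub, mul_one, add_mul, one_mul, hsq, add_zero, add_sub_cancel_right]
  have hleft : (1 - ρ) * (1 + ρ) = 1 := by
    rw [mul_add, mul_one, sub_mul, one_mul, hsq, sub_zero, sub_add_cancel]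
  exact Ring.inverse_unit ⟨1 + ρ, 1 - ρ, hright, hleft⟩

theorem xiMap_one_add_apply {K : Type*} [Field K] {ρ : IncidenceAlgebra K X}
    (hρ : SupportedOnMinMax ρ) (g : IncidenceAlgebra K X) (u v : X) :
    xiMap (1 + ρ) g u v = g u v + ρ u v * (g v v - g u u) := by
  have hexpand : (1 + ρ) * g * (1 - ρ) = g + ρ * g - g * ρ - ρ * g * ρ := by noncomm_ring
  rw [xiMap, hρ.inverse_one_add, hexpand, hρ.mul_mul_self, sub_zero,
    IncidenceAlgebra.sub_apply, IncidenceAlgebra.add_apply, hρ.left_mul_apply, hρ.right_mul_apply]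
  ring

end SupportedOnMinMax

end Basic

theorem HomJacobi.of_lie_lie_eq {A : Type*} [LieRing A] {φ : A → A}
    (h : ∀ a b c : A, ⁅⁅a, b⁆, φ c⁆ = ⁅⁅a, b⁆, c⁆) : HomJacobi φ := by
  intro a b c
  rw [h, h, h, ← lie_skew ⁅a, b⁆, ← lie_skew ⁅b, c⁆, ← lie_skew ⁅c, a⁆, ← neg_add, ← neg_add,
    neg_eq_zero, ← lie_jacobi a b c]
  abel

section Root

variable {K : Type*} [Ring K] {X : Type*} [DecidableEq X]

/-- The root `ε_x - ε_y` evaluated at the diagonal idempotent `e_z`; it is the eigenvalue of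
`ad e_z` on `e_{xy}`. -/
def root (K : Type*) [Ring K] {X : Type*} [DecidableEq X] (x y z : X) : K :=
  (if z = x then 1 else 0) - if z = y then 1 else 0

theorem root_left {x y : X} (h : x ≠ y) : root K x y x = 1 := by
  simp [root, h]

theorem root_right {x y : X} (h : x ≠ y) : root K x y y = -1 := by
  simp [root, h.symm]

theorem root_of_ne {x y z : X} (hx : z ≠ x) (hy : z ≠ y) : root K x y z = 0 := by
  simp [root, hx, hy]

theorem eq_or_eq_of_root_ne_zero {x y z : X} (h : root K x y z ≠ 0) : z = x ∨ z = y := by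
  by_contra! hz
  exact h (root_of_ne hz.1 hz.2)

theorem eq_and_eq_of_root_ne_zero [PartialOrder X] {u v x y : X} (hxy : x < y) (huv : u < v)
    (hx : root K u v x ≠ 0) (hy : root K u v y ≠ 0) : u = x ∧ v = y := by
  rcases eq_or_eq_of_root_ne_zero hx with rfl | rfl <;>
    rcases eq_or_eq_of_root_ne_zero hy with rfl | rfl
  · exact absurd hxy (lt_irrefl _)
  · exact ⟨rfl, rfl⟩
  · exact absurd hxy huv.not_gt
  · exact absurd hxy (lt_irrefl _)

end Root

section MatrixUnits

variable {K : Type*} [Field K] {X : Type*} [PartialOrder X] [DecidableEq X]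

/-- The diagonal idempotent `e_x = e_{xx}`, whose bracket with a function rescales its entries. -/
def eDiag (K : Type*) [Field K] {X : Type*} [PartialOrder X] [DecidableEq X] (x : X) :
    IncidenceAlgebra K X :=
  eSingle K x x le_rfl

theorem eSingle_apply {x y : X} (h : x ≤ y) (a b : X) :
    eSingle K x y h a b = if a = x ∧ b = y then 1 else 0 :=
  rfl

theorem eSingle_apply_self {x y : X} (h : x ≤ y) : eSingle K x y h x y = 1 :=
  if_pos ⟨rfl, rfl⟩

theorem eSingle_ne_zero {x y : X} (h : x ≤ y) : eSingle K x y h ≠ 0 := fun h0 => by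
  simpa [h0] using eSingle_apply_self (K := K) h

theorem hasZeroDiag_eSingle {x y : X} (h : x < y) : HasZeroDiag (eSingle K x y h.le) := by
  intro a
  rw [eSingle_apply, if_neg]
  rintro ⟨rfl, rfl⟩
  exact lt_irrefl _ h

theorem eDiag_apply_of_ne {u v : X} (h : u ≠ v) (z : X) : eDiag K z u v = 0 :=
  if_neg fun ⟨hu, hv⟩ => h (hu.trans hv.symm)

theorem sum_eDiag [Fintype X] : ∑ x, eDiag K x = (1 : IncidenceAlgebra K X) := by
  ext a b
  let entry : IncidenceAlgebra K X →+ K :=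
    { toFun := fun g => g a b, map_zero' := rfl, map_add' := fun _ _ => rfl }
  change entry _ = _
  rw [map_sum]
  change ∑ x, (if a = x ∧ b = x then (1 : K) else 0) = _
  simp [ite_and, eq_comm]

variable [LocallyFiniteOrder X]

theorem eSingle_mul_apply {x y : X} (h : x ≤ y) (f : IncidenceAlgebra K X) (a b : X) :
    (eSingle K x y h * f) a b = if a = x then f y b else 0 := by
  rw [mul_apply]
  split_ifs with ha
  · subst ha
    rw [Finset.sum_eq_single y]
    · rw [eSingle_apply_self, one_mul]
    · intro t _ ht
      rw [eSingle_apply, if_neg fun h' => ht h'.2, zero_mul]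
    · intro hy
      rw [apply_eq_zero_of_not_le (fun hyb => hy (Finset.mem_Icc.2 ⟨h, hyb⟩)) f, mul_zero]
  · refine Finset.sum_eq_zero fun t _ => ?_
    rw [eSingle_apply, if_neg fun h' => ha h'.1, zero_mul]

theorem mul_eSingle_apply {x y : X} (h : x ≤ y) (f : IncidenceAlgebra K X) (a b : X) :
    (f * eSingle K x y h) a b = if b = y then f a x else 0 := by
  rw [mul_apply]
  split_ifs with hb
  · subst hb
    rw [Finset.sum_eq_single x]
    · rw [eSingle_apply_self, mul_one]
    · intro t _ ht
      rw [eSingle_apply, if_neg fun h' => ht h'.1, mul_zero]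
    · intro hx
      rw [apply_eq_zero_of_not_le (fun hax => hx (Finset.mem_Icc.2 ⟨hax, h⟩)) f, zero_mul]
  · refine Finset.sum_eq_zero fun t _ => ?_
    rw [eSingle_apply, if_neg fun h' => hb h'.2, mul_zero]

theorem eSingle_lie_apply {x y : X} (h : x ≤ y) (f : IncidenceAlgebra K X) (a b : X) :
    ⁅eSingle K x y h, f⁆ a b = (if a = x then f y b else 0) - if b = y then f a x else 0 := by
  rw [incidence_lie_apply, eSingle_mul_apply, mul_eSingle_apply]

theorem eSingle_lie_apply_self {x y : X} (h : x ≤ y) (f : IncidenceAlgebra K X) :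
    ⁅eSingle K x y h, f⁆ x y = f y y - f x x := by
  rw [eSingle_lie_apply, if_pos rfl, if_pos rfl]

theorem eDiag_lie_apply (z : X) (f : IncidenceAlgebra K X) (u v : X) :
    ⁅eDiag K z, f⁆ u v = root K u v z * f u v := by
  rw [eDiag, eSingle_lie_apply, root, sub_mul, ite_mul, ite_mul, one_mul, zero_mul]
  congr 1 <;> split_ifs <;> simp_all

theorem eDiag_lie_eSingle (z : X) {x y : X} (h : x ≤ y) :
    ⁅eDiag K z, eSingle K x y h⁆ = root K x y z • eSingle K x y h := by
  ext u v
  rw [eDiag_lie_apply, constSMul_apply, smul_eq_mul, eSingle_apply]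
  split_ifs with huv
  · rw [huv.1, huv.2]
  · rw [mul_zero, mul_zero]

theorem eDiag_lie_eDiag (z w : X) : ⁅eDiag K z, eDiag K w⁆ = 0 :=
  (eDiag_lie_eSingle z le_rfl).trans (by rw [root, sub_self, zero_smul])

theorem eSingle_lie_eDiag {x y : X} (h : x ≤ y) (z : X) :
    ⁅eSingle K x y h, eDiag K z⁆ = -(root K x y z • eSingle K x y h) := by
  rw [← lie_skew, eDiag_lie_eSingle]

theorem eDiag_left_lie_eSingle {x y : X} (h : x < y) :
    ⁅eDiag K x, eSingle K x y h.le⁆ = eSingle K x y h.le := by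
  rw [eDiag_lie_eSingle, root_left h.ne, one_smul]

theorem eSingle_lie_eSingle {x y z : X} (hxy : x < y) (hyz : y < z) :
    ⁅eSingle K x y hxy.le, eSingle K y z hyz.le⁆ = eSingle K x z (hxy.trans hyz).le := by
  ext u v
  rw [eSingle_lie_apply, eSingle_apply, eSingle_apply, eSingle_apply]
  simp [(hxy.trans hyz).ne, ite_and]

theorem eDiag_lie_lie_eDiag {u v : X} (h : u < v) (f : IncidenceAlgebra K X) :
    ⁅eDiag K u, ⁅f, eDiag K v⁆⁆ = f u v • eSingle K u v h.le := by
  ext a b hab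
  rw [eDiag_lie_apply, ← lie_skew, IncidenceAlgebra.neg_apply, eDiag_lie_apply,
    constSMul_apply, smul_eq_mul, eSingle_apply]
  split_ifs with huv
  · rw [huv.1, huv.2, root_left h.ne, root_right h.ne]
    ring
  · suffices root K a b u * root K a b v = 0 by linear_combination -f a b * this
    rcases hab.eq_or_lt with rfl | hab
    · simp [root]
    · by_contra! hne
      exact huv (eq_and_eq_of_root_ne_zero h hab (left_ne_zero_of_mul hne)
        (right_ne_zero_of_mul hne))

theorem lie_smul_one (c : K) (g : IncidenceAlgebra K X) :
    ⁅g, c • (1 : IncidenceAlgebra K X)⁆ = 0 := by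
  rw [lie_smul, (Commute.one_right g).lie_eq, smul_zero]

theorem HasZeroDiag.eDiag_lie_eDiag_mul {f : IncidenceAlgebra K X} (hf : HasZeroDiag f) (x : X) :
    ⁅eDiag K x, eDiag K x * f⁆ = eDiag K x * f := by
  ext a b
  rw [eDiag_lie_apply, eDiag, eSingle_mul_apply]
  split_ifs with ha
  · subst ha
    rcases eq_or_ne a b with rfl | hab
    · rw [hf, mul_zero]
    · rw [root_left hab, one_mul]
  · rw [mul_zero]

theorem HasZeroDiag.sum_lie [Fintype X] {f : IncidenceAlgebra K X} (hf : HasZeroDiag f) :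
    ∑ x, ⁅eDiag K x, eDiag K x * f⁆ = f := by
  rw [Finset.sum_congr rfl fun x _ => hf.eDiag_lie_eDiag_mul x, ← Finset.sum_mul, sum_eDiag,
    one_mul]

theorem HasZeroDiag.map [Finite X] {f : IncidenceAlgebra K X} (hf : HasZeroDiag f)
    (φ : IncidenceAlgebra K X →ₗ⁅K⁆ IncidenceAlgebra K X) : HasZeroDiag (φ f) := by
  cases nonempty_fintype X
  rw [← hf.sum_lie, map_sum]
  refine Finset.sum_induction _ HasZeroDiag (fun a b ha hb x => ?_) (fun _ => rfl) fun x _ => ?_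
  · rw [IncidenceAlgebra.add_apply, ha, hb, add_zero]
  · rw [LieHom.map_lie]
    exact hasZeroDiag_lie _ _

end MatrixUnits

section Centralizer

theorem eq_of_forall_lt_eq {X α : Type*} [PartialOrder X]
    (hconn : ∀ x y : X, Relation.ReflTransGen (fun a b : X => a ≤ b ∨ b ≤ a) x y)
    {d : X → α} (hd : ∀ x y, x < y → d x = d y) (x y : X) : d x = d y := by
  have hd' : ∀ a b, a ≤ b → d a = d b := fun a b hab =>
    hab.eq_or_lt.elim (congrArg d) (hd a b)
  induction hconn x y with
  | refl => rfl
  | tail _ hbc ih => exact ih.trans (hbc.elim (hd' _ _) fun hcb => (hd' _ _ hcb).symm)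

variable {K : Type*} [Field K] {X : Type*} [PartialOrder X] [DecidableEq X]
  [LocallyFiniteOrder X]

theorem supportedOnMinMax_sub_smul_one
    (hconn : ∀ x y : X, Relation.ReflTransGen (fun a b : X => a ≤ b ∨ b ≤ a) x y)
    {f : IncidenceAlgebra K X} (hf : ∀ (x y : X) (h : x < y), ⁅eSingle K x y h.le, f⁆ = 0)
    (x₀ : X) :
    SupportedOnMinMax (f - f x₀ x₀ • 1) := by
  have hentry : ∀ x y : X, x < y → ∀ a b,
      (if a = x then f y b else 0) - (if b = y then f a x else 0) = 0 := fun x y h a b => by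
    rw [← eSingle_lie_apply h.le, hf x y h, IncidenceAlgebra.zero_apply]
  constructor
  · intro x
    have hdiag : f x x = f x₀ x₀ := eq_of_forall_lt_eq hconn (d := fun x => f x x)
      (fun x y h => (sub_eq_zero.1 (by simpa using hentry x y h x y)).symm) x x₀
    simp [hdiag]
  · intro x y hxy hext
    have hoff : f x y = 0 := by
      rcases hext with hx | hy
      · obtain ⟨w, hw⟩ := not_isMin_iff.1 hx
        simpa [hxy.ne'] using hentry w x hw w y
      · obtain ⟨w, hw⟩ := not_isMax_iff.1 hy
        simpa [hxy.ne] using hentry y w hw x w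
    simp [hoff, hxy.ne]

end Centralizer

namespace RepData

variable {K : Type*} [Field K] {X : Type*} [PartialOrder X] [DecidableEq X]
  [LocallyFiniteOrder X] {φ : IncidenceAlgebra K X → IncidenceAlgebra K X}
  {ρ : IncidenceAlgebra K X} {σ : X → X → K}
  {ν : IncidenceAlgebra K X →ₗ[K] IncidenceAlgebra K X}

theorem sigma_self (h : RepData φ ρ σ ν) (x : X) : σ x x = 1 := by
  obtain ⟨-, -, hσ_ne, hσ_mul, -⟩ := h
  exact (mul_eq_left₀ (hσ_ne x x le_rfl)).1 (hσ_mul x x x le_rfl le_rfl).symm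

theorem nu_apply_of_ne (h : RepData φ ρ σ ν) (f : IncidenceAlgebra K X) {u v : X} (huv : u ≠ v) :
    ν f u v = 0 := by
  obtain ⟨-, -, -, -, -, hν, -⟩ := h
  obtain ⟨c, hc⟩ := hν f
  rw [hc, constSMul_apply, one_apply, if_neg huv, smul_zero]

theorem apply_eq (h : RepData φ ρ σ ν) (f : IncidenceAlgebra K X) (u v : X) :
    φ f u v = σ u v * f u v + ρ u v * (f v v - f u u) + ν f u v := by
  have hσ := h.sigma_self
  obtain ⟨hρ_diag, hρ, -, -, -, -, -, hφ⟩ := h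
  have hM : ∀ a b, Mmul K σ f a b = σ a b * f a b := fun _ _ => rfl
  rw [hφ, IncidenceAlgebra.add_apply, SupportedOnMinMax.xiMap_one_add_apply ⟨hρ_diag, hρ⟩, hM, hM,
    hM, hσ, hσ, one_mul, one_mul]

theorem rho_apply (h : RepData φ ρ σ ν) {u v : X} (huv : u < v) :
    ρ u v = φ (eDiag K v) u v := by
  rw [h.apply_eq, h.nu_apply_of_ne _ huv.ne, eDiag_apply_of_ne huv.ne, eDiag, eSingle_apply_self,
    eSingle_apply, if_neg fun h' => huv.ne h'.1]
  ring

theorem sigma_apply (h : RepData φ ρ σ ν) {u v : X} (huv : u < v) :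
    σ u v = φ (eSingle K u v huv.le) u v := by
  rw [h.apply_eq, h.nu_apply_of_ne _ huv.ne, eSingle_apply_self, hasZeroDiag_eSingle huv,
    hasZeroDiag_eSingle huv]
  ring

theorem nu_apply_self (h : RepData φ ρ σ ν) (f : IncidenceAlgebra K X) (u : X) :
    ν f u u = φ f u u - f u u := by
  rw [h.apply_eq, h.sigma_self]
  ring

theorem unique {ρ' : IncidenceAlgebra K X} {σ' : X → X → K}
    {ν' : IncidenceAlgebra K X →ₗ[K] IncidenceAlgebra K X}
    (h' : RepData φ ρ' σ' ν') (h : RepData φ ρ σ ν) :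
    ρ' = ρ ∧ (∀ x y : X, x ≤ y → σ' x y = σ x y) ∧ ν' = ν := by
  refine ⟨?_, fun x y hxy => ?_, ?_⟩
  · ext u v huv
    rcases huv.eq_or_lt with rfl | huv
    · rw [h.1, h'.1]
    · rw [h.rho_apply huv, h'.rho_apply huv]
  · rcases hxy.eq_or_lt with rfl | hxy
    · rw [h.sigma_self, h'.sigma_self]
    · rw [h.sigma_apply hxy, h'.sigma_apply hxy]
  · ext f u v huv
    rcases eq_or_ne u v with rfl | huv
    · rw [h.nu_apply_self, h'.nu_apply_self]
    · rw [h.nu_apply_of_ne f huv, h'.nu_apply_of_ne f huv]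

theorem lie_apply_eq (h : RepData φ ρ σ ν) {g : IncidenceAlgebra K X} (hg : HasZeroDiag g)
    (f : IncidenceAlgebra K X) : ⁅g, φ f⁆ = ⁅g, f⁆ := by
  have hz : SupportedOnMinMax (φ f - f - ν f) := by
    constructor
    · intro x
      rw [IncidenceAlgebra.sub_apply, IncidenceAlgebra.sub_apply, h.apply_eq, h.sigma_self]
      ring
    · intro x y hxy hext
      obtain ⟨-, hρ, -, -, hσ, -⟩ := id h
      rw [IncidenceAlgebra.sub_apply, IncidenceAlgebra.sub_apply, h.apply_eq,
        hσ x y hxy hext, hρ x y hxy hext]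
      ring
  obtain ⟨c, hc⟩ : ∃ c : K, ν f = c • 1 := by
    obtain ⟨-, -, -, -, -, hν, -⟩ := h
    exact hν f
  simpa only [lie_sub, hc, lie_smul_one, sub_zero, sub_eq_zero] using hz.lie_eq_zero hg

theorem homJacobi (h : RepData φ ρ σ ν) : HomJacobi φ :=
  .of_lie_lie_eq fun a b => h.lie_apply_eq (hasZeroDiag_lie a b)

end RepData

section Endomorphism

variable {K : Type*} [Field K] {X : Type*} [PartialOrder X] [DecidableEq X]
  [LocallyFiniteOrder X] {φ : IncidenceAlgebra K X →ₗ⁅K⁆ IncidenceAlgebra K X}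

theorem map_eDiag_lie_map_eSingle (z : X) {x y : X} (h : x ≤ y) :
    ⁅φ (eDiag K z), φ (eSingle K x y h)⁆ = root K x y z • φ (eSingle K x y h) := by
  rw [← LieHom.map_lie, eDiag_lie_eSingle, map_smul]

theorem map_eDiag_lie_map_eDiag (z w : X) : ⁅φ (eDiag K z), φ (eDiag K w)⁆ = 0 := by
  rw [← LieHom.map_lie, eDiag_lie_eDiag, map_zero]

theorem hasZeroDiag_map_eSingle {x y : X} (h : x < y) :
    HasZeroDiag (φ (eSingle K x y h.le)) := by
  rw [← eDiag_left_lie_eSingle h, LieHom.map_lie]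
  exact hasZeroDiag_lie _ _

theorem map_eSingle_ne_zero (hinj : Function.Injective φ) {x y : X} (h : x ≤ y) :
    φ (eSingle K x y h) ≠ 0 :=
  (map_ne_zero_iff φ hinj).2 (eSingle_ne_zero h)

namespace HomJacobi

theorem eSingle_lie_map_eDiag_eq_smul (hφ : HomJacobi φ) {x y : X} (h : x < y) (z : X) :
    ⁅eSingle K x y h.le, φ (eDiag K z)⁆ = root K x y z • ⁅eSingle K x y h.le, φ (eDiag K x)⁆ := by
  have hj := hφ (eDiag K x) (eSingle K x y h.le) (eDiag K z)
  rwa [eDiag_left_lie_eSingle h, eSingle_lie_eDiag, eDiag_lie_eDiag, zero_lie, add_zero, neg_lie,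
    smul_lie, ← sub_eq_add_neg, sub_eq_zero] at hj

/-- The pair `(x, y)` is recovered from the smallest entry `(u, v)` of `φ (e_{xy})`: that entry has
the weights of `e_{xy}` under all `φ (e_z)`, while the Hom-Jacobi identity makes them vanish for
`z ≠ u, v`. -/
theorem map_eDiag_apply_sub (hφ : HomJacobi φ) (hinj : Function.Injective φ) {x y : X}
    (h : x < y) (z : X) : φ (eDiag K z) x x - φ (eDiag K z) y y = root K x y z := by
  obtain ⟨u, v, huv, hlie⟩ := exists_ne_zero_lie_apply_eq (map_eSingle_ne_zero hinj h.le)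
  have hlt : u < v := lt_of_le_of_ne (le_of_ne_zero huv) fun he =>
    huv (he ▸ hasZeroDiag_map_eSingle h u)
  have hweight : ∀ w, φ (eDiag K w) u u - φ (eDiag K w) v v = root K x y w := by
    intro w
    apply mul_right_cancel₀ huv
    rw [← smul_eq_mul (root K x y w), ← constSMul_apply, ← map_eDiag_lie_map_eSingle, hlie]
    ring
  have hvanish : ∀ w, root K x y w ≠ 0 → root K u v w ≠ 0 := by
    intro w hw h0
    have hzero := congrArg (fun f => f u v) (hφ.eSingle_lie_map_eDiag_eq_smul hlt w)
    simp only [h0, zero_smul, eSingle_lie_apply_self, IncidenceAlgebra.zero_apply] at hzero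
    exact hw (by rw [← hweight]; linear_combination -hzero)
  obtain ⟨rfl, rfl⟩ := eq_and_eq_of_root_ne_zero h hlt
    (hvanish x (by simp [root_left h.ne])) (hvanish y (by simp [root_right h.ne]))
  exact hweight z

theorem eSingle_lie_map_eDiag_left (hφ : HomJacobi φ) (hinj : Function.Injective φ) {x y : X}
    (h : x < y) : ⁅eSingle K x y h.le, φ (eDiag K x)⁆ = -eSingle K x y h.le := by
  by_contra hne
  set d := ⁅eSingle K x y h.le, φ (eDiag K x)⁆ + eSingle K x y h.le with hd
  obtain ⟨u, v, huv, hlie⟩ := exists_ne_zero_lie_apply_eq (g := d)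
    (by rwa [hd, Ne, add_eq_zero_iff_eq_neg])
  have hcomm : ∀ z, root K x y z = 0 → ⁅φ (eDiag K z), d⁆ = 0 := by
    intro z hroot
    have hz : ⁅φ (eDiag K z), eSingle K x y h.le⁆ = 0 := by
      rw [← lie_skew, hφ.eSingle_lie_map_eDiag_eq_smul h, hroot, zero_smul, neg_zero]
    rw [hd, lie_add, leibniz_lie, hz, map_eDiag_lie_map_eDiag, zero_lie, lie_zero, add_zero,
      add_zero]
  have hlt : u < v := lt_of_le_of_ne (le_of_ne_zero huv) fun he => huv <| by
    rw [hd, IncidenceAlgebra.add_apply, ← he, hasZeroDiag_lie, hasZeroDiag_eSingle h, add_zero]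
  have hvanish : ∀ z, root K u v z ≠ 0 → root K x y z ≠ 0 := by
    intro z hz h0
    have hzero := hlie (φ (eDiag K z))
    rw [hcomm z h0, IncidenceAlgebra.zero_apply, mul_comm (d u v), ← sub_mul,
      hφ.map_eDiag_apply_sub hinj hlt] at hzero
    exact mul_ne_zero hz huv hzero.symm
  obtain ⟨rfl, rfl⟩ := eq_and_eq_of_root_ne_zero hlt h
    (hvanish u (by simp [root_left hlt.ne])) (hvanish v (by simp [root_right hlt.ne]))
  apply huv
  rw [hd, IncidenceAlgebra.add_apply, eSingle_lie_apply_self, eSingle_apply_self]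
  linear_combination -hφ.map_eDiag_apply_sub hinj h x - root_left (K := K) h.ne

theorem eSingle_lie_map_eDiag (hφ : HomJacobi φ) (hinj : Function.Injective φ) {x y : X}
    (h : x < y) (z : X) :
    ⁅eSingle K x y h.le, φ (eDiag K z)⁆ = ⁅eSingle K x y h.le, eDiag K z⁆ := by
  rw [hφ.eSingle_lie_map_eDiag_eq_smul h, hφ.eSingle_lie_map_eDiag_left hinj h, eSingle_lie_eDiag,
    smul_neg]

variable (hconn : ∀ x y : X, Relation.ReflTransGen (fun a b : X => a ≤ b ∨ b ≤ a) x y)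
include hconn

theorem exists_supportedOnMinMax_map_eDiag (hφ : HomJacobi φ) (hinj : Function.Injective φ)
    (z : X) : ∃ c : K, SupportedOnMinMax (φ (eDiag K z) - eDiag K z - c • 1) :=
  ⟨_, supportedOnMinMax_sub_smul_one hconn
    (fun x y h => by rw [lie_sub, hφ.eSingle_lie_map_eDiag hinj h, sub_self]) z⟩

theorem lie_map_eDiag (hφ : HomJacobi φ) (hinj : Function.Injective φ)
    {g : IncidenceAlgebra K X} (hg : HasZeroDiag g) (z : X) :
    ⁅g, φ (eDiag K z)⁆ = ⁅g, eDiag K z⁆ := by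
  obtain ⟨c, hc⟩ := hφ.exists_supportedOnMinMax_map_eDiag hconn hinj z
  simpa only [lie_sub, lie_smul_one, sub_zero, sub_eq_zero] using hc.lie_eq_zero hg

theorem map_eSingle (hφ : HomJacobi φ) (hinj : Function.Injective φ) {x y : X} (h : x < y) :
    φ (eSingle K x y h.le) = φ (eSingle K x y h.le) x y • eSingle K x y h.le := by
  set g := φ (eSingle K x y h.le) with hg
  have hg_diag : HasZeroDiag g := hasZeroDiag_map_eSingle h
  have hweight : ∀ z u v, root K u v z * g u v = root K x y z * g u v := by
    intro z u v
    rw [← eDiag_lie_apply, ← lie_skew, ← hφ.lie_map_eDiag hconn hinj hg_diag, lie_skew, hg,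
      map_eDiag_lie_map_eSingle, constSMul_apply, smul_eq_mul]
  ext u v huv
  rw [constSMul_apply, smul_eq_mul, eSingle_apply]
  split_ifs with hxy
  · rw [hxy.1, hxy.2, mul_one]
  · by_contra hne
    rw [mul_zero] at hne
    have hlt : u < v := lt_of_le_of_ne huv fun he => hne (he ▸ hg_diag u)
    have hroot : ∀ z, root K u v z = root K x y z := fun z => mul_right_cancel₀ hne (hweight z u v)
    exact hxy (eq_and_eq_of_root_ne_zero h hlt (K := K)
      (by simp [hroot, root_left h.ne]) (by simp [hroot, root_right h.ne]))

theorem map_eSingle_apply_eq_one_of_lt_right (hφ : HomJacobi φ) (hinj : Function.Injective φ)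
    {x y z : X} (hxy : x < y) (hyz : y < z) : φ (eSingle K x y hxy.le) x y = 1 := by
  have hxz := hxy.trans hyz
  have hj := hφ (eDiag K z) (eSingle K x y hxy.le) (eSingle K y z hyz.le)
  rw [eDiag_lie_eSingle, root_of_ne hxz.ne' hyz.ne', zero_smul, zero_lie, zero_add,
    eSingle_lie_eSingle hxy hyz, hφ.lie_map_eDiag hconn hinj (hasZeroDiag_eSingle hxz),
    eSingle_lie_eDiag, eSingle_lie_eDiag, root_right hxz.ne, root_right hyz.ne,
    hφ.map_eSingle hconn hinj hxy, lie_smul, neg_smul, neg_smul, one_smul, neg_neg, one_smul,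
    neg_neg, ← lie_skew, eSingle_lie_eSingle hxy hyz] at hj
  have hentry := congrArg (fun f => f x z) hj
  simp only [IncidenceAlgebra.add_apply, constSMul_apply, IncidenceAlgebra.neg_apply,
    eSingle_apply_self, IncidenceAlgebra.zero_apply, smul_eq_mul] at hentry
  linear_combination -hentry

theorem map_eSingle_apply_eq_one_of_lt_left (hφ : HomJacobi φ) (hinj : Function.Injective φ)
    {x y z : X} (hxy : x < y) (hyz : y < z) : φ (eSingle K y z hyz.le) y z = 1 := by
  have hxz := hxy.trans hyz
  have hj := hφ (eDiag K x) (eSingle K x y hxy.le) (eSingle K y z hyz.le)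
  rw [eDiag_left_lie_eSingle hxy, eSingle_lie_eDiag, root_of_ne hxy.ne hxz.ne, zero_smul, neg_zero,
    zero_lie, add_zero, eSingle_lie_eSingle hxy hyz,
    hφ.lie_map_eDiag hconn hinj (hasZeroDiag_eSingle hxz), eSingle_lie_eDiag, root_left hxz.ne,
    hφ.map_eSingle hconn hinj hyz, lie_smul, one_smul, eSingle_lie_eSingle hxy hyz] at hj
  have hentry := congrArg (fun f => f x z) hj
  simp only [IncidenceAlgebra.add_apply, constSMul_apply, IncidenceAlgebra.neg_apply,
    eSingle_apply_self, IncidenceAlgebra.zero_apply, smul_eq_mul] at hentry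
  linear_combination hentry

theorem map_eSingle_apply_mul (hφ : HomJacobi φ) (hinj : Function.Injective φ) {x y z : X}
    (hxy : x < y) (hyz : y < z) : φ (eSingle K x z (hxy.trans hyz).le) x z =
      φ (eSingle K x y hxy.le) x y * φ (eSingle K y z hyz.le) y z := by
  rw [← eSingle_lie_eSingle hxy hyz, LieHom.map_lie, hφ.map_eSingle hconn hinj hxy,
    hφ.map_eSingle hconn hinj hyz, smul_lie, lie_smul, eSingle_lie_eSingle hxy hyz]
  simp only [constSMul_apply, eSingle_apply_self, smul_eq_mul, mul_one]

theorem map_apply_self_sub (hφ : HomJacobi φ) (hinj : Function.Injective φ)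
    (f : IncidenceAlgebra K X) {x y : X} (h : x < y) :
    φ f y y - φ f x x = f y y - f x x := by
  have hj := hφ (eDiag K x) (eSingle K x y h.le) f
  rw [eDiag_left_lie_eSingle h, hφ.lie_map_eDiag hconn hinj (hasZeroDiag_lie _ _),
    hφ.map_eSingle hconn hinj h, lie_smul, ← lie_skew _ (eDiag K x),
    ← lie_skew _ (eSingle K x y h.le)] at hj
  have hentry := congrArg (fun f => f x y) hj
  simp only [IncidenceAlgebra.add_apply, IncidenceAlgebra.neg_apply, IncidenceAlgebra.zero_apply,
    constSMul_apply, eSingle_lie_apply_self, eDiag_lie_apply, root_left h.ne,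
    hasZeroDiag_lie f _ _] at hentry
  linear_combination hentry

/-- Apply `φ` to `[e_u, [f, e_v]] = f(u,v) e_{uv}` and compare the `(u,v)` entries. -/
theorem map_apply_of_lt (hφ : HomJacobi φ) (hinj : Function.Injective φ)
    (f : IncidenceAlgebra K X) {u v : X} (h : u < v) :
    φ f u v = φ (eSingle K u v h.le) u v * f u v + φ (eDiag K v) u v * (f v v - f u u) := by
  obtain ⟨c, hc⟩ := hφ.exists_supportedOnMinMax_map_eDiag hconn hinj v
  set ζ := φ (eDiag K v) - eDiag K v - c • 1 with hζ
  have hζ_apply : ζ u v = φ (eDiag K v) u v := by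
    simp [hζ, eDiag_apply_of_ne h.ne, h.ne]
  have hbracket : ⁅φ f, φ (eDiag K v)⁆ u v =
      φ f u v + φ (eDiag K v) u v * (φ f u u - φ f v v) := by
    have hsplit : φ (eDiag K v) = eDiag K v + ζ + c • 1 := by rw [hζ]; abel
    rw [← hζ_apply, hsplit, lie_add, lie_add, lie_smul_one, add_zero,
      IncidenceAlgebra.add_apply, hc.lie_apply, ← lie_skew, IncidenceAlgebra.neg_apply,
      eDiag_lie_apply, root_right h.ne]
    ring
  have himage : ⁅eDiag K u, ⁅φ f, φ (eDiag K v)⁆⁆ = f u v • φ (eSingle K u v h.le) := by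
    rw [← map_smul, ← eDiag_lie_lie_eDiag h, LieHom.map_lie, LieHom.map_lie, ← lie_skew,
      ← hφ.lie_map_eDiag hconn hinj (hasZeroDiag_lie _ _), lie_skew]
  have hentry := congrArg (fun f => f u v) himage
  simp only [eDiag_lie_apply, root_left h.ne, constSMul_apply, hbracket, smul_eq_mul] at hentry
  linear_combination hentry + φ (eDiag K v) u v * hφ.map_apply_self_sub hconn hinj f h

end HomJacobi

/-- The element `ρ` of the decomposition of `φ`: column `v` is the off-diagonal part of column `v`
of `φ (e_v)`. -/
def repRho (φ : IncidenceAlgebra K X →ₗ⁅K⁆ IncidenceAlgebra K X) : IncidenceAlgebra K X where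
  toFun u v := if u = v then 0 else φ (eDiag K v) u v
  eq_zero_of_not_le' u v huv := by rw [apply_eq_zero_of_not_le huv, ite_self]

open Classical in
/-- The multiplicative map `σ` of the decomposition of `φ`, with the junk value `1` on pairs
`(x, y)` such that `x ≤ y` fails. -/
noncomputable def repSigma (φ : IncidenceAlgebra K X →ₗ⁅K⁆ IncidenceAlgebra K X) (x y : X) : K :=
  if h : x < y then φ (eSingle K x y h.le) x y else 1

/-- The central-valued map `ν` of the decomposition of `φ`; its scalar is read off at the diagonal
entry `x₀`, all diagonal entries giving the same one when `φ` is Hom-Lie and `X` is connected. -/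
def repNu (φ : IncidenceAlgebra K X →ₗ⁅K⁆ IncidenceAlgebra K X) (x₀ : X) :
    IncidenceAlgebra K X →ₗ[K] IncidenceAlgebra K X where
  toFun f := (φ f x₀ x₀ - f x₀ x₀) • 1
  map_add' f g := by
    rw [map_add, IncidenceAlgebra.add_apply, IncidenceAlgebra.add_apply, add_sub_add_comm, add_smul]
  map_smul' c f := by
    rw [map_smul, constSMul_apply, constSMul_apply, ← smul_sub, smul_assoc, RingHom.id_apply]

theorem repRho_apply_of_lt {u v : X} (h : u < v) : repRho φ u v = φ (eDiag K v) u v :=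
  if_neg h.ne

theorem repSigma_of_lt {x y : X} (h : x < y) : repSigma φ x y = φ (eSingle K x y h.le) x y :=
  dif_pos h

theorem repSigma_self (x : X) : repSigma φ x x = 1 :=
  dif_neg (lt_irrefl x)

theorem repNu_apply (x₀ : X) (f : IncidenceAlgebra K X) :
    repNu φ x₀ f = (φ f x₀ x₀ - f x₀ x₀) • 1 :=
  rfl

namespace HomJacobi

theorem repSigma_ne_zero
    (hconn : ∀ x y : X, Relation.ReflTransGen (fun a b : X => a ≤ b ∨ b ≤ a) x y)
    (hφ : HomJacobi φ) (hinj : Function.Injective φ) {x y : X} (hxy : x ≤ y) :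
    repSigma φ x y ≠ 0 := by
  rcases hxy.eq_or_lt with rfl | hlt
  · exact repSigma_self (φ := φ) x ▸ one_ne_zero
  · intro h0
    apply map_eSingle_ne_zero hinj hlt.le
    rw [hφ.map_eSingle hconn hinj hlt, ← repSigma_of_lt hlt, h0, zero_smul]

variable (hconn : ∀ x y : X, Relation.ReflTransGen (fun a b : X => a ≤ b ∨ b ≤ a) x y)
include hconn

theorem supportedOnMinMax_repRho (hφ : HomJacobi φ) (hinj : Function.Injective φ) :
    SupportedOnMinMax (repRho φ) := by
  refine ⟨fun x => if_pos rfl, fun x y hxy hext => ?_⟩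
  obtain ⟨c, hc⟩ := hφ.exists_supportedOnMinMax_map_eDiag hconn hinj y
  rw [repRho_apply_of_lt hxy]
  simpa [eDiag_apply_of_ne hxy.ne, hxy.ne] using hc.2 x y hxy hext

theorem repSigma_mul (hφ : HomJacobi φ) (hinj : Function.Injective φ) {x y z : X} (hxy : x ≤ y)
    (hyz : y ≤ z) : repSigma φ x z = repSigma φ x y * repSigma φ y z := by
  rcases hxy.eq_or_lt with rfl | hxy
  · rw [repSigma_self, one_mul]
  rcases hyz.eq_or_lt with rfl | hyz
  · rw [repSigma_self, mul_one]
  rw [repSigma_of_lt hxy, repSigma_of_lt hyz, repSigma_of_lt (hxy.trans hyz),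
    hφ.map_eSingle_apply_mul hconn hinj hxy hyz]

theorem repSigma_eq_one (hφ : HomJacobi φ) (hinj : Function.Injective φ) {x y : X} (hxy : x < y)
    (hext : ¬IsMin x ∨ ¬IsMax y) : repSigma φ x y = 1 := by
  rw [repSigma_of_lt hxy]
  rcases hext with hx | hy
  · obtain ⟨w, hw⟩ := not_isMin_iff.1 hx
    exact hφ.map_eSingle_apply_eq_one_of_lt_left hconn hinj hw hxy
  · obtain ⟨w, hw⟩ := not_isMax_iff.1 hy
    exact hφ.map_eSingle_apply_eq_one_of_lt_right hconn hinj hxy hw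

theorem map_eq_xiMap_add_repNu (hφ : HomJacobi φ) (hinj : Function.Injective φ) (x₀ : X)
    (f : IncidenceAlgebra K X) :
    φ f = xiMap (1 + repRho φ) (Mmul K (repSigma φ) f) + repNu φ x₀ f := by
  have hdiag : ∀ u, φ f u u - f u u = φ f x₀ x₀ - f x₀ x₀ := fun u =>
    eq_of_forall_lt_eq hconn (d := fun u => φ f u u - f u u)
      (fun x y h => by linear_combination -hφ.map_apply_self_sub hconn hinj f h) u x₀
  have hM : ∀ a b, Mmul K (repSigma φ) f a b = repSigma φ a b * f a b := fun _ _ => rfl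
  have hρ := hφ.supportedOnMinMax_repRho hconn hinj
  ext u v huv
  rw [IncidenceAlgebra.add_apply, hρ.xiMap_one_add_apply, hM, hM, hM, repSigma_self,
    repSigma_self, repNu_apply, constSMul_apply, smul_eq_mul, one_apply]
  rcases huv.eq_or_lt with rfl | huv
  · rw [hρ.1, repSigma_self, if_pos rfl]
    linear_combination hdiag u
  · rw [if_neg huv.ne, hφ.map_apply_of_lt hconn hinj f huv, repSigma_of_lt huv,
      repRho_apply_of_lt huv]
    ring

theorem repData (hφ : HomJacobi φ) (hinj : Function.Injective φ)
    (hJ : ∀ f, HasZeroDiag f → HasZeroDiag (φ f)) (x₀ : X) :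
    RepData φ (repRho φ) (repSigma φ) (repNu φ x₀) :=
  have hρ := hφ.supportedOnMinMax_repRho hconn hinj
  ⟨hρ.1, hρ.2, fun _ _ => hφ.repSigma_ne_zero hconn hinj,
    fun _ _ _ => hφ.repSigma_mul hconn hinj, fun _ _ => hφ.repSigma_eq_one hconn hinj,
    fun _ => ⟨_, rfl⟩,
    fun f hf => by rw [repNu_apply, hJ f hf, hf, sub_zero, zero_smul],
    hφ.map_eq_xiMap_add_repNu hconn hinj x₀⟩

end HomJacobi

end Endomorphism

theorem stmt8_general {K : Type*} [Field K] {X : Type*} [PartialOrder X] [Nonempty X]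
    [DecidableEq X] [LocallyFiniteOrder X]
    (hconn : ∀ x y : X, Relation.ReflTransGen (fun a b : X => a ≤ b ∨ b ≤ a) x y)
    (φ : IncidenceAlgebra K X →ₗ⁅K⁆ IncidenceAlgebra K X) (hinj : Function.Injective φ)
    (hJ : ∀ f, HasZeroDiag f → HasZeroDiag (φ f)) :
    HomJacobi ⇑φ ↔
      ∃ (ρ : IncidenceAlgebra K X) (σ : X → X → K)
        (ν : IncidenceAlgebra K X →ₗ[K] IncidenceAlgebra K X),
        RepData ⇑φ ρ σ ν ∧
        ∀ (ρ' : IncidenceAlgebra K X) (σ' : X → X → K)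
          (ν' : IncidenceAlgebra K X →ₗ[K] IncidenceAlgebra K X),
          RepData ⇑φ ρ' σ' ν' →
            ρ' = ρ ∧ (∀ x y : X, x ≤ y → σ' x y = σ x y) ∧ ν' = ν := by
  constructor
  · intro hφ
    have h := hφ.repData hconn hinj hJ (Classical.arbitrary X)
    exact ⟨_, _, _, h, fun _ _ _ h' => h'.unique h⟩
  · rintro ⟨ρ, σ, ν, h, -⟩
    exact h.homJacobi

/-- main theorem -/
theorem stmt8 {K : Type*} [Field K] {X : Type*} [PartialOrder X] [Fintype X] [DecidableEq X]
    [LocallyFiniteOrder X]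
    (hcard : 1 < Fintype.card X)
    (hconn : ∀ x y : X, Relation.ReflTransGen (fun a b : X => a ≤ b ∨ b ≤ a) x y)
    (φ : IncidenceAlgebra K X ≃ₗ⁅K⁆ IncidenceAlgebra K X) :
    HomJacobi ⇑φ ↔
      ∃ (ρ : IncidenceAlgebra K X) (σ : X → X → K)
        (ν : IncidenceAlgebra K X →ₗ[K] IncidenceAlgebra K X),
        RepData ⇑φ ρ σ ν ∧
        ∀ (ρ' : IncidenceAlgebra K X) (σ' : X → X → K)
          (ν' : IncidenceAlgebra K X →ₗ[K] IncidenceAlgebra K X),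
          RepData ⇑φ ρ' σ' ν' →
            ρ' = ρ ∧ (∀ x y : X, x ≤ y → σ' x y = σ x y) ∧ ν' = ν := by
  have : Nonempty X := Fintype.card_pos_iff.1 (zero_lt_one.trans hcard)
  exact stmt8_general hconn φ.toLieHom φ.injective fun _ hf => hf.map φ.toLieHom
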